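/- Let n ≥ 2, let Ω, Ω̃ ⊆ ℝⁿ be bounded, uniformly convex open domains with smooth boundary, with the closure of Ω̃ contained in the open unit ball B₁(0). Then there exist positive constants C₁₄, C₁₅, C₁₆, depending only on Ω and Ω̃, such that for every strictly convex solution (u, c) of the second boundary value problem for the Lorentz mean curvature operator on (Ω, Ω̃): (i) ⟨ξ, D²u(x) ξ⟩ ≤ C₁₄ |ξ|² for all x in the closure of Ω and all ξ ∈ ℝⁿ; and (ii) C₁₅ ≤ tr(D²u(x)) = ∑_{i=1}^n ∂²u/∂xᵢ²(x) ≤ C₁₆ for all x in the closure of Ω. -/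

import Mathlib

noncomputable section
open MeasureTheory
open scoped RealInnerProductSpace

/-- The `i`-th standard basis vector of `ℝⁿ`. -/
def ev (n : ℕ) (i : Fin n) : EuclideanSpace ℝ (Fin n) := EuclideanSpace.single i 1

/-- Lorentz mean curvature operator `M[u] x = ∑ i, ∂ᵢ (∂ᵢ u / √(1 - |∇u|²)) x`. -/
def MOp (n : ℕ) (u : EuclideanSpace ℝ (Fin n) → ℝ) (x : EuclideanSpace ℝ (Fin n)) : ℝ :=
  ∑ i : Fin n,
    fderiv ℝ (fun y => fderiv ℝ u y (ev n i) / Real.sqrt (1 - ‖gradient u y‖ ^ 2)) x (ev n i)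

/-- Euclidean mean curvature operator `E[u] x = ∑ i, ∂ᵢ (∂ᵢ u / √(1 + |∇u|²)) x`. -/
def EOp (n : ℕ) (u : EuclideanSpace ℝ (Fin n) → ℝ) (x : EuclideanSpace ℝ (Fin n)) : ℝ :=
  ∑ i : Fin n,
    fderiv ℝ (fun y => fderiv ℝ u y (ev n i) / Real.sqrt (1 + ‖gradient u y‖ ^ 2)) x (ev n i)

/-- `Ω` is a uniformly convex domain with smooth boundary, exhibited by the defining
function `h` with uniform concavity constant `θ`:  `h` is smooth, `Ω = {h > 0}`,
`|∇h| = 1` on `∂Ω`, and `⟨ξ, D²h(p) ξ⟩ ≤ -θ |ξ|²` for all `p, ξ`. -/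
def IsUnifConvexDefFn (n : ℕ) (Ω : Set (EuclideanSpace ℝ (Fin n)))
    (h : EuclideanSpace ℝ (Fin n) → ℝ) (θ : ℝ) : Prop :=
  ContDiff ℝ (⊤ : ℕ∞) h ∧ Ω = {p | 0 < h p} ∧
  (∀ p ∈ frontier Ω, ‖gradient h p‖ = 1) ∧ 0 < θ ∧
  ∀ p ξ : EuclideanSpace ℝ (Fin n), ⟪ξ, fderiv ℝ (gradient h) p ξ⟫ ≤ -θ * ‖ξ‖ ^ 2

/-- `u` is smooth on the closure of `Ω` (i.e. on an open neighbourhood of it). -/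
def SmoothOnClosure (n : ℕ) (Ω : Set (EuclideanSpace ℝ (Fin n)))
    (u : EuclideanSpace ℝ (Fin n) → ℝ) : Prop :=
  ∃ U : Set (EuclideanSpace ℝ (Fin n)), IsOpen U ∧ closure Ω ⊆ U ∧ ContDiffOn ℝ (⊤ : ℕ∞) u U

/-- `(u, c)` is a strictly convex solution of the second boundary value problem for the
Lorentz mean curvature operator on `(Ω, Ω')`: `u` is smooth up to the boundary, spacelike
(`|∇u| < 1`), has positive definite Hessian `D²u` on the closure of `Ω`, its gradient map
is a bijection from `Ω` onto `Ω'`, and `M[u] = c` on `Ω`. -/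
def IsSol (n : ℕ) (Ω Ω' : Set (EuclideanSpace ℝ (Fin n)))
    (u : EuclideanSpace ℝ (Fin n) → ℝ) (c : ℝ) : Prop :=
  SmoothOnClosure n Ω u ∧
  (∀ x ∈ closure Ω, ‖gradient u x‖ < 1) ∧
  (∀ x ∈ closure Ω, ∀ ξ : EuclideanSpace ℝ (Fin n), ξ ≠ 0 →
      0 < ⟪ξ, fderiv ℝ (gradient u) x ξ⟫) ∧
  Set.BijOn (gradient u) Ω Ω' ∧
  (∀ x ∈ Ω, MOp n u x = c)

/-- `(u, c)` is a strictly convex solution of the second boundary value problem for the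
Euclidean mean curvature operator on `(Ω, Ω')`. -/
def IsSolE (n : ℕ) (Ω Ω' : Set (EuclideanSpace ℝ (Fin n)))
    (u : EuclideanSpace ℝ (Fin n) → ℝ) (c : ℝ) : Prop :=
  SmoothOnClosure n Ω u ∧
  (∀ x ∈ closure Ω, ∀ ξ : EuclideanSpace ℝ (Fin n), ξ ≠ 0 →
      0 < ⟪ξ, fderiv ℝ (gradient u) x ξ⟫) ∧
  Set.BijOn (gradient u) Ω Ω' ∧
  (∀ x ∈ Ω, EOp n u x = c)

/-- `ut` is the Legendre transform of `u`: it is smooth up to the boundary of `Ω'`,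
satisfies `ut (∇u x) = ⟨x, ∇u x⟩ - u x` and `∇ut (∇u x) = x` for `x ∈ Ω`. -/
def IsLegendre (n : ℕ) (Ω Ω' : Set (EuclideanSpace ℝ (Fin n)))
    (u ut : EuclideanSpace ℝ (Fin n) → ℝ) : Prop :=
  SmoothOnClosure n Ω' ut ∧
  (∀ x ∈ Ω, ut (gradient u x) = ⟪x, gradient u x⟫ - u x) ∧
  (∀ x ∈ Ω, gradient ut (gradient u x) = x)

/-- The coefficient matrix `s_ij(p) = (δ_ij + pᵢpⱼ/(1 - |p|²)) / √(1 - |p|²)` of the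
Lorentz mean curvature operator written in nondivergence form. -/
def sMat (n : ℕ) (p : EuclideanSpace ℝ (Fin n)) (i j : Fin n) : ℝ :=
  ((if i = j then (1 : ℝ) else 0) + p i * p j / (1 - ‖p‖ ^ 2)) / Real.sqrt (1 - ‖p‖ ^ 2)

/-- `Ω` has smooth boundary: it is the superlevel set of a smooth function whose
gradient does not vanish on the boundary. -/
def HasSmoothBoundary (n : ℕ) (Ω : Set (EuclideanSpace ℝ (Fin n))) : Prop :=
  ∃ g : EuclideanSpace ℝ (Fin n) → ℝ, ContDiff ℝ (⊤ : ℕ∞) g ∧ Ω = {p | 0 < g p} ∧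
    ∀ p ∈ frontier Ω, gradient g p ≠ 0

/-- `B(p) = Iₙ + p pᵀ / (v (1 + v))`, `v = √(1 - |p|²)`: the positive square root of the
inverse induced metric of a spacelike graph with gradient `p`. -/
def sqB (n : ℕ) (p : EuclideanSpace ℝ (Fin n)) : Matrix (Fin n) (Fin n) ℝ :=
  1 + (Real.sqrt (1 - ‖p‖ ^ 2) * (1 + Real.sqrt (1 - ‖p‖ ^ 2)))⁻¹ •
      Matrix.of fun i j => p i * p j

/-- `B'(p) = Iₙ - p pᵀ / (1 + v)`, `v = √(1 - |p|²)`: the square root of the induced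
metric of a spacelike graph with gradient `p`. -/
def sqBinv (n : ℕ) (p : EuclideanSpace ℝ (Fin n)) : Matrix (Fin n) (Fin n) ℝ :=
  1 - (1 + Real.sqrt (1 - ‖p‖ ^ 2))⁻¹ • Matrix.of fun i j => p i * p j


section Aux
variable {n : ℕ}

lemma aux_decomp (v : EuclideanSpace ℝ (Fin n)) : v = ∑ i, v i • ev n i := by
  ext j
  simp [ev, Pi.single_apply]

lemma aux_bilin (H : EuclideanSpace ℝ (Fin n) →L[ℝ] EuclideanSpace ℝ (Fin n))
    (hs : ∀ v w, ⟪v, H w⟫ = ⟪w, H v⟫) (hp : ∀ v, 0 ≤ ⟪v, H v⟫)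
    (v w : EuclideanSpace ℝ (Fin n)) :
    |⟪v, H w⟫| ≤ (n:ℝ)^2 * (∑ i, ⟪ev n i, H (ev n i)⟫) * ‖v‖ * ‖w‖ := by
  set T := ∑ i, ⟪ev n i, H (ev n i)⟫ with hT
  have hd : ∀ i, ⟪ev n i, H (ev n i)⟫ ≤ T := fun i =>
    Finset.single_le_sum (f := fun i => ⟪ev n i, H (ev n i)⟫) (fun i _ => hp _) (Finset.mem_univ i)
  have hij : ∀ i j, |⟪ev n i, H (ev n j)⟫| ≤ T := by
    intro i j
    have h1 := hp (ev n i + ev n j)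
    have h2 := hp (ev n i - ev n j)
    simp only [map_add, map_sub, inner_add_left, inner_add_right, inner_sub_left,
      inner_sub_right] at h1 h2
    rw [hs (ev n j) (ev n i)] at h1 h2
    rw [abs_le]
    constructor <;> linarith [hd i, hd j]
  have hT0 : 0 ≤ T := Finset.sum_nonneg fun i _ => hp _
  have e : ⟪v, H w⟫ = ∑ i, ∑ j, v i * w j * ⟪ev n i, H (ev n j)⟫ := by
    conv_lhs => rw [aux_decomp v, aux_decomp w]
    simp only [map_sum, map_smul, sum_inner, inner_sum, real_inner_smul_left,
      real_inner_smul_right]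
    rw [Finset.sum_comm]
    refine Finset.sum_congr rfl fun i _ => Finset.sum_congr rfl fun j _ => ?_
    ring
  have hc : ∀ (z : EuclideanSpace ℝ (Fin n)) i, |z i| ≤ ‖z‖ := fun z i => by
    simpa using PiLp.norm_apply_le z i
  rw [e]
  calc _ ≤ ∑ i, |∑ j, v i * w j * ⟪ev n i, H (ev n j)⟫| := Finset.abs_sum_le_sum_abs _ _
    _ ≤ ∑ i : Fin n, ∑ j : Fin n, |v i * w j * ⟪ev n i, H (ev n j)⟫| :=
      Finset.sum_le_sum fun i _ => Finset.abs_sum_le_sum_abs _ _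
    _ ≤ ∑ i : Fin n, ∑ j : Fin n, ‖v‖ * ‖w‖ * T := by
      refine Finset.sum_le_sum fun i _ => Finset.sum_le_sum fun j _ => ?_
      rw [abs_mul, abs_mul]
      have := hc v i
      have := hc w j
      have := hij i j
      gcongr
    _ = _ := by simp; ring

lemma aux_fderiv_eq {u : EuclideanSpace ℝ (Fin n) → ℝ} (y v : EuclideanSpace ℝ (Fin n)) :
    fderiv ℝ u y v = ⟪gradient u y, v⟫ := by
  simp [gradient]

lemma aux_grad_formula {u : EuclideanSpace ℝ (Fin n) → ℝ} :
    gradient u = fun y => ∑ i, fderiv ℝ u y (ev n i) • ev n i := by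
  funext y
  conv_lhs => rw [aux_decomp (gradient u y)]
  refine Finset.sum_congr rfl fun i _ => ?_
  rw [aux_fderiv_eq]
  simp only [ev, EuclideanSpace.inner_single_right]
  simp

lemma aux_inner_fderiv_gradient {u : EuclideanSpace ℝ (Fin n) → ℝ} {x : EuclideanSpace ℝ (Fin n)}
    (v w : EuclideanSpace ℝ (Fin n)) (hu : ContDiffAt ℝ 2 u x) :
    ⟪v, fderiv ℝ (gradient u) x w⟫ = fderiv ℝ (fderiv ℝ u) x w v := by
  have hd : DifferentiableAt ℝ (fderiv ℝ u) x :=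
    (hu.fderiv_right (m := 1) (by norm_num)).differentiableAt (by norm_num)
  have hf : (fun y => ⟪v, gradient u y⟫) = fun y => fderiv ℝ u y v := by
    funext y; rw [aux_fderiv_eq, real_inner_comm]
  have hg : DifferentiableAt ℝ (gradient u) x := by
    have e : gradient u = fun y => ∑ i, fderiv ℝ u y (ev n i) • ev n i := aux_grad_formula
    rw [e]
    fun_prop
  have h1 : HasFDerivAt (fun y => ⟪v, gradient u y⟫) ((innerSL ℝ v).comp (fderiv ℝ (gradient u) x)) x :=
    (innerSL ℝ v).hasFDerivAt.comp x hg.hasFDerivAt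
  rw [hf] at h1
  have h2 : HasFDerivAt (fun y => fderiv ℝ u y v)
      ((ContinuousLinearMap.apply ℝ ℝ v).comp (fderiv ℝ (fderiv ℝ u) x)) x :=
    (ContinuousLinearMap.apply ℝ ℝ v).hasFDerivAt.comp x hd.hasFDerivAt
  have h3 := DFunLike.congr_fun (h1.unique h2) w
  simpa using h3

lemma aux_gradient_contDiffAt {u : EuclideanSpace ℝ (Fin n) → ℝ} {x : EuclideanSpace ℝ (Fin n)}
    (hu : ContDiffAt ℝ (⊤ : ℕ∞) u x) : ContDiffAt ℝ (⊤ : ℕ∞) (gradient u) x := by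
  have h1 : ContDiffAt ℝ (⊤ : ℕ∞) (fderiv ℝ u) x := hu.fderiv_right (by simp)
  rw [aux_grad_formula]
  exact ContDiffAt.sum fun i _ => (h1.clm_apply contDiffAt_const).smul contDiffAt_const

lemma aux_symm {u : EuclideanSpace ℝ (Fin n) → ℝ} {x : EuclideanSpace ℝ (Fin n)}
    (v w : EuclideanSpace ℝ (Fin n)) (hu : ContDiffAt ℝ 2 u x) :
    ⟪v, fderiv ℝ (gradient u) x w⟫ = ⟪w, fderiv ℝ (gradient u) x v⟫ := by
  rw [aux_inner_fderiv_gradient v w hu, aux_inner_fderiv_gradient w v hu]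
  exact (hu.isSymmSndFDerivAt (by simp)) w v

/-- nondivergence form -/
lemma aux_MOp {u : EuclideanSpace ℝ (Fin n) → ℝ} {x : EuclideanSpace ℝ (Fin n)}
    (hu : ContDiffAt ℝ (⊤ : ℕ∞) u x) (hx : ‖gradient u x‖ < 1) :
    MOp n u x = (∑ i, ⟪ev n i, fderiv ℝ (gradient u) x (ev n i)⟫) / √(1 - ‖gradient u x‖ ^ 2)
      + ⟪gradient u x, fderiv ℝ (gradient u) x (gradient u x)⟫ / √(1 - ‖gradient u x‖ ^ 2) ^ 3 := by
  have hG : HasFDerivAt (gradient u) (fderiv ℝ (gradient u) x) x :=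
    ((aux_gradient_contDiffAt hu).differentiableAt (by simp)).hasFDerivAt
  set H := fderiv ℝ (gradient u) x with hH
  set p := gradient u x with hp
  have hpos : 0 < 1 - ‖p‖ ^ 2 := by nlinarith [norm_nonneg p]
  set W := √(1 - ‖p‖ ^ 2) with hW
  have hW0 : 0 < W := Real.sqrt_pos.2 hpos
  have hterm : ∀ i, fderiv ℝ (fun y => fderiv ℝ u y (ev n i) / Real.sqrt (1 - ‖gradient u y‖ ^ 2)) x
      (ev n i) = ⟪ev n i, H (ev n i)⟫ / W + p i * ⟪p, H (ev n i)⟫ / W ^ 3 := by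
    intro i
    have h1 : HasDerivAt (fun t : ℝ => x + t • ev n i) (ev n i) 0 := by
      simpa using ((hasDerivAt_id (0:ℝ)).smul_const (ev n i)).const_add x
    have hG' : HasFDerivAt (gradient u) H (x + (0:ℝ) • ev n i) := by simpa using hG
    have hg : HasDerivAt (fun t : ℝ => gradient u (x + t • ev n i)) (H (ev n i)) 0 :=
      HasFDerivAt.comp_hasDerivAt (f := fun t : ℝ => x + t • ev n i) 0 hG' h1
    have hnum : HasDerivAt (fun t : ℝ => fderiv ℝ u (x + t • ev n i) (ev n i))
        ⟪H (ev n i), ev n i⟫ 0 := by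
      simp only [aux_fderiv_eq]
      simpa using hg.inner ℝ (hasDerivAt_const (0:ℝ) (ev n i))
    have hsq : HasDerivAt (fun t : ℝ => 1 - ‖gradient u (x + t • ev n i)‖ ^ 2)
        (-(2 * ⟪p, H (ev n i)⟫)) 0 := by
      have h5 := hg.norm_sq.const_sub 1
      rw [zero_smul, add_zero] at h5
      exact h5
    have hsqrt := hsq.sqrt (by simpa using hpos.ne')
    have hq := hnum.div hsqrt (by simpa using hW0.ne')
    have hdiff : DifferentiableAt ℝ
        (fun y => fderiv ℝ u y (ev n i) / Real.sqrt (1 - ‖gradient u y‖ ^ 2)) x := by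
      simp only [aux_fderiv_eq]
      have hn1 : DifferentiableAt ℝ (fun y => ⟪gradient u y, ev n i⟫) x :=
        hG.differentiableAt.inner ℝ (differentiableAt_const (ev n i))
      have hn2 : DifferentiableAt ℝ (fun y => √(1 - ‖gradient u y‖ ^ 2)) x :=
        DifferentiableAt.sqrt ((differentiableAt_const _).sub
          (hG.differentiableAt.norm_sq ℝ)) hpos.ne'
      have hn3 : √(1 - ‖gradient u x‖ ^ 2) ≠ 0 := hW0.ne'
      simp only [div_eq_mul_inv]
      exact hn1.mul (hn2.inv hn3)
    have hdiff' : HasFDerivAt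
        (fun y => fderiv ℝ u y (ev n i) / Real.sqrt (1 - ‖gradient u y‖ ^ 2))
        (fderiv ℝ (fun y => fderiv ℝ u y (ev n i) / Real.sqrt (1 - ‖gradient u y‖ ^ 2)) x)
        (x + (0:ℝ) • ev n i) := by
      rw [zero_smul, add_zero]; exact hdiff.hasFDerivAt
    have hd2 := hdiff'.comp_hasDerivAt 0 h1
    have huniq := hd2.unique hq
    rw [huniq]
    have hpi : fderiv ℝ u x (ev n i) = p i := by
      rw [aux_fderiv_eq]
      simp only [ev, EuclideanSpace.inner_single_right]
      simp [hp]
    simp only [zero_smul, add_zero, ← hp, ← hW, hpi]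
    rw [real_inner_comm]
    field_simp
    ring
  unfold MOp
  simp only [hterm]
  rw [Finset.sum_add_distrib, ← Finset.sum_div, ← Finset.sum_div]
  congr 2
  conv_rhs => rw [show H p = ∑ i, p i • H (ev n i) by
    conv_lhs => rw [aux_decomp p]
    simp]
  simp [inner_sum, inner_smul_right]

/-- second order necessary condition -/
lemma aux_second_order {u : EuclideanSpace ℝ (Fin n) → ℝ} {x x0 v : EuclideanSpace ℝ (Fin n)} {A : ℝ}
    (hu : ∀ᶠ y in nhds x, ContDiffAt ℝ (⊤ : ℕ∞) u y)
    (hmax : IsLocalMax (fun y => u y - A / 2 * ‖y - x0‖ ^ 2) x) :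
    ⟪v, fderiv ℝ (gradient u) x v⟫ ≤ A * ‖v‖ ^ 2 := by
  by_contra hcon
  push Not at hcon
  have hl : ∀ t : ℝ, HasDerivAt (fun t : ℝ => x + t • v) v t := fun t => by
    simpa using ((hasDerivAt_id t).smul_const v).const_add x
  have hcont : Filter.Tendsto (fun t : ℝ => x + t • v) (nhds 0) (nhds x) := by
    have := (hl 0).continuousAt.tendsto
    simpa using this
  set f : ℝ → ℝ := fun t => u (x + t • v) - A / 2 * ‖x + t • v - x0‖ ^ 2 with hf
  have hfd : ∀ᶠ t in nhds (0:ℝ), HasDerivAt f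
      (⟪gradient u (x + t • v), v⟫ - A * ⟪x + t • v - x0, v⟫) t := by
    filter_upwards [hcont.eventually hu] with t ht
    have h1 := (ht.differentiableAt (by simp)).hasFDerivAt.comp_hasDerivAt t (hl t)
    rw [aux_fderiv_eq] at h1
    have h2 := (((hl t).sub_const x0).norm_sq).const_mul (A / 2)
    have h3 := h1.sub h2
    rw [show A / 2 * (2 * ⟪x + t • v - x0, v⟫) = A * ⟪x + t • v - x0, v⟫ by ring] at h3
    exact h3
  have hderiv : deriv f =ᶠ[nhds 0] fun t => ⟪gradient u (x + t • v), v⟫ - A * ⟪x + t • v - x0, v⟫ :=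
    hfd.mono fun t ht => ht.deriv
  have hG : HasFDerivAt (gradient u) (fderiv ℝ (gradient u) x) (x + (0:ℝ) • v) := by
    simpa using ((aux_gradient_contDiffAt hu.self_of_nhds).differentiableAt (by simp)).hasFDerivAt
  have hdd : HasDerivAt (deriv f) (⟪v, fderiv ℝ (gradient u) x v⟫ - A * ‖v‖ ^ 2) 0 := by
    refine HasDerivAt.congr_of_eventuallyEq ?_ hderiv
    have h1 := (hG.comp_hasDerivAt 0 (hl 0)).inner ℝ (hasDerivAt_const (0:ℝ) v)
    have h2 := ((((hl 0).sub_const x0).inner ℝ (hasDerivAt_const (0:ℝ) v))).const_mul A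
    have h3 := h1.sub h2
    rw [inner_zero_right, inner_zero_right, zero_add, zero_add, real_inner_self_eq_norm_sq,
      real_inner_comm] at h3
    exact h3
  have hfmax : IsLocalMax f 0 := by
    have := hcont.eventually hmax
    filter_upwards [this] with t ht
    simpa [hf] using ht
  have hd0 : deriv f 0 = 0 := hfmax.deriv_eq_zero
  have hmin : IsLocalMin f 0 := by
    refine isLocalMin_of_deriv_deriv_pos ?_ hd0 hfd.self_of_nhds.continuousAt
    rw [hdd.deriv]; linarith
  have hc : f =ᶠ[nhds 0] fun _ => f 0 := by
    filter_upwards [hfmax, hmin] with t h1 h2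
    exact le_antisymm h1 h2
  have h3 : deriv f =ᶠ[nhds 0] fun _ => 0 := by
    have := hc.deriv
    simpa using this
  have h4 : deriv (deriv f) 0 = 0 := by
    have := h3.deriv_eq
    simpa using this
  rw [hdd.deriv] at h4
  linarith

lemma aux_convex {Ω : Set (EuclideanSpace ℝ (Fin n))} {g : EuclideanSpace ℝ (Fin n) → ℝ} {θ : ℝ}
    (hΩ : IsUnifConvexDefFn n Ω g θ) : Convex ℝ Ω := by
  obtain ⟨hg, hΩe, -, hθ, hH⟩ := hΩ
  intro a ha b hb s t hs ht hst
  rw [hΩe] at ha hb ⊢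
  simp only [Set.mem_ofPred_eq] at ha hb ⊢
  set v := b - a with hv
  have hl : ∀ t : ℝ, HasDerivAt (fun t : ℝ => a + t • v) v t := fun t => by
    simpa using ((hasDerivAt_id t).smul_const v).const_add a
  set f : ℝ → ℝ := fun t => g (a + t • v) with hf
  have hfd : ∀ t, HasDerivAt f ⟪gradient g (a + t • v), v⟫ t := by
    intro t
    have h1 := ((hg.differentiable (by simp)) (a + t • v)).hasFDerivAt.comp_hasDerivAt t (hl t)
    rwa [aux_fderiv_eq] at h1
  have hderiv : deriv f = fun t => ⟪gradient g (a + t • v), v⟫ := funext fun t => (hfd t).deriv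
  have hdd : ∀ t, HasDerivAt (deriv f) ⟪v, fderiv ℝ (gradient g) (a + t • v) v⟫ t := by
    intro t
    rw [hderiv]
    have hG := ((aux_gradient_contDiffAt (hg.contDiffAt (x := a + t • v))).differentiableAt
      (by simp)).hasFDerivAt
    have h1 := (hG.comp_hasDerivAt t (hl t)).inner ℝ (hasDerivAt_const t v)
    rw [inner_zero_right, zero_add, real_inner_comm] at h1
    exact h1
  have hconc : ConcaveOn ℝ Set.univ f := by
    refine concaveOn_univ_of_deriv2_nonpos (fun t => (hfd t).differentiableAt)
      (fun t => (hdd t).differentiableAt) ?_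
    intro t
    change deriv (deriv f) t ≤ 0
    rw [(hdd t).deriv]
    have := hH (a + t • v) v
    nlinarith [sq_nonneg ‖v‖]
  have h1 := hconc.2 (Set.mem_univ 0) (Set.mem_univ 1) hs ht hst
  have e : a + t • v = s • a + t • b := by
    rw [hv, eq_sub_iff_add_eq.2 hst, smul_sub, sub_smul, one_smul]; abel
  simp only [hf, smul_eq_mul, mul_zero, mul_one, zero_add, zero_smul, add_zero, one_smul] at h1
  rw [← e]
  rw [hv, add_sub_cancel] at h1
  refine lt_of_lt_of_le ?_ h1
  rcases hs.eq_or_lt with h0 | h0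
  · have : t = 1 := by linarith
    simp [← h0, this, hb]
  · have := mul_pos h0 ha
    have := mul_nonneg ht hb.le
    linarith

end Aux

set_option maxHeartbeats 1000000 in
theorem statement11 (n : ℕ) (hn : 2 ≤ n) (Ω Ω' : Set (EuclideanSpace ℝ (Fin n)))
    (g h : EuclideanSpace ℝ (Fin n) → ℝ) (θ₁ θ₂ : ℝ)
    (hΩb : Bornology.IsBounded Ω) (hΩ'b : Bornology.IsBounded Ω')
    (hΩ : IsUnifConvexDefFn n Ω g θ₁) (hΩ' : IsUnifConvexDefFn n Ω' h θ₂)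
    (hsub : closure Ω' ⊆ Metric.ball (0 : EuclideanSpace ℝ (Fin n)) 1) :
    ∃ C₁₄ C₁₅ C₁₆ : ℝ, 0 < C₁₄ ∧ 0 < C₁₅ ∧ 0 < C₁₆ ∧
      ∀ (u : EuclideanSpace ℝ (Fin n) → ℝ) (c : ℝ), IsSol n Ω Ω' u c →
        (∀ x ∈ closure Ω, ∀ ξ : EuclideanSpace ℝ (Fin n),
            ⟪ξ, fderiv ℝ (gradient u) x ξ⟫ ≤ C₁₄ * ‖ξ‖ ^ 2) ∧
        (∀ x ∈ closure Ω,
            C₁₅ ≤ ∑ i : Fin n, ⟪ev n i, fderiv ℝ (gradient u) x (ev n i)⟫ ∧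
            ∑ i : Fin n, ⟪ev n i, fderiv ℝ (gradient u) x (ev n i)⟫ ≤ C₁₆) := by
  have hconv := aux_convex hΩ
  rcases Ω.eq_empty_or_nonempty with hE | ⟨x0, hx0⟩
  · exact ⟨1, 1, 1, one_pos, one_pos, one_pos, fun u c _ => by simp [hE]⟩
  rcases Ω'.eq_empty_or_nonempty with hE | ⟨p1, hp1⟩
  · refine ⟨1, 1, 1, one_pos, one_pos, one_pos, fun u c hu => ?_⟩
    have := hu.2.2.2.1.mapsTo hx0
    simp [hE] at this
  have hΩo : IsOpen Ω := by
    rw [hΩ.2.1]; exact isOpen_lt continuous_const hΩ.1.continuous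
  have hΩ'o : IsOpen Ω' := by
    rw [hΩ'.2.1]; exact isOpen_lt continuous_const hΩ'.1.continuous
  have hn0 : 0 < n := by omega
  -- a second point in the target
  obtain ⟨p2, hp2, hp12⟩ : ∃ p2 ∈ Ω', p2 ≠ p1 := by
    have : Nonempty (Fin n) := ⟨⟨0, hn0⟩⟩
    have hne : (nhdsWithin p1 {p1}ᶜ).NeBot := inferInstance
    have h1 : ∀ᶠ y in nhdsWithin p1 {p1}ᶜ, y ∈ Ω' :=
      mem_nhdsWithin_of_mem_nhds (hΩ'o.mem_nhds hp1)
    have h2 : ∀ᶠ y in nhdsWithin p1 {p1}ᶜ, y ∈ ({p1}ᶜ : Set _) := self_mem_nhdsWithin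
    obtain ⟨y, hy1, hy2⟩ := (h1.and h2).exists
    exact ⟨y, hy1, hy2⟩
  -- gradient bound
  obtain ⟨ρ, hρ0, hρ1, hρ⟩ : ∃ ρ : ℝ, 0 ≤ ρ ∧ ρ < 1 ∧ ∀ p ∈ Ω', ‖p‖ ≤ ρ := by
    have hcpt : IsCompact (closure Ω') := hΩ'b.isCompact_closure
    obtain ⟨q, hq, hmax⟩ := hcpt.exists_isMaxOn ⟨p1, subset_closure hp1⟩ continuous_norm.continuousOn
    refine ⟨‖q‖, norm_nonneg _, by simpa using hsub hq, fun p hp => hmax (subset_closure hp)⟩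
  obtain ⟨r, hr, hball⟩ := Metric.nhds_basis_closedBall.mem_iff.1 (hΩo.mem_nhds hx0)
  obtain ⟨D, hD⟩ := Metric.isBounded_iff.1 hΩb
  set D' := max D 1 with hD'
  have hD'0 : 0 < D' := lt_of_lt_of_le one_pos (le_max_right _ _)
  set w0 := √(1 - ρ ^ 2) with hw0
  have hρ2 : 0 < 1 - ρ ^ 2 := by nlinarith
  have hw0p : 0 < w0 := Real.sqrt_pos.2 hρ2
  have hw01 : w0 ≤ 1 := Real.sqrt_le_one.2 (by nlinarith [sq_nonneg ρ])
  have hnR : (0:ℝ) < n := by exact_mod_cast hn0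
  set K : ℝ := ((n:ℝ)^2 + 1) / w0 ^ 3 with hK
  have hK0 : 0 < K := by positivity
  set A : ℝ := 3 / r with hA
  have hA0 : 0 < A := by positivity
  set δ : ℝ := ‖p2 - p1‖ / ((n:ℝ)^2 * D') with hδ
  have hδ0 : 0 < δ := by
    have : 0 < ‖p2 - p1‖ := norm_pos_iff.2 (sub_ne_zero.2 hp12)
    positivity
  refine ⟨(n:ℝ)^2 * (K * (n * A)), δ / K, K * (n * A), by positivity, by positivity, by positivity, ?_⟩
  rintro u c ⟨⟨U, hU, hΩU, huU⟩, hgrad, hpos, hbij, hM⟩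
  have hsm : ∀ x ∈ closure Ω, ContDiffAt ℝ (⊤ : ℕ∞) u x := fun x hx =>
    huU.contDiffAt (hU.mem_nhds (hΩU hx))
  have h2 : ∀ x ∈ closure Ω, ContDiffAt ℝ 2 u x := fun x hx =>
    (hsm x hx).of_le (show ((2 : ℕ∞) : WithTop ℕ∞) ≤ _ from WithTop.coe_le_coe.2 le_top)
  have hpos' : ∀ x ∈ closure Ω, ∀ v, 0 ≤ ⟪v, fderiv ℝ (gradient u) x v⟫ := by
    intro x hx v
    rcases eq_or_ne v 0 with rfl | hv
    · simp
    · exact (hpos x hx v hv).le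
  have hbil : ∀ x ∈ closure Ω, ∀ v w, |⟪v, fderiv ℝ (gradient u) x w⟫| ≤
      (n:ℝ)^2 * (∑ i, ⟪ev n i, fderiv ℝ (gradient u) x (ev n i)⟫) * ‖v‖ * ‖w‖ := fun x hx v w =>
    aux_bilin _ (fun v w => aux_symm v w (h2 x hx)) (hpos' x hx) v w
  set T : EuclideanSpace ℝ (Fin n) → ℝ :=
    fun x => ∑ i, ⟪ev n i, fderiv ℝ (gradient u) x (ev n i)⟫ with hT
  have hT0 : ∀ x ∈ closure Ω, 0 ≤ T x := fun x hx => Finset.sum_nonneg fun i _ => hpos' x hx _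
  have hcl : ∀ x ∈ Ω, x ∈ closure Ω := fun x hx => subset_closure hx
  have hTc : ∀ x ∈ Ω, T x ≤ c ∧ c ≤ K * T x := by
    intro x hx
    have hcx := hcl x hx
    have e := aux_MOp (hsm x hcx) (hgrad x hcx)
    rw [hM x hx] at e
    set p := gradient u x with hp
    have hpρ : ‖p‖ ≤ ρ := hρ p (hbij.mapsTo hx)
    set W := √(1 - ‖p‖ ^ 2) with hW
    have hwW : w0 ≤ W := Real.sqrt_le_sqrt (by nlinarith [norm_nonneg p])
    have hW0 : 0 < W := lt_of_lt_of_le hw0p hwW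
    have hW1 : W ≤ 1 := Real.sqrt_le_one.2 (by nlinarith [sq_nonneg ‖p‖])
    have hTx := hT0 x hcx
    have hQ0 := hpos' x hcx p
    have hQ1 : ⟪p, fderiv ℝ (gradient u) x p⟫ ≤ (n:ℝ)^2 * T x := by
      have h1 := le_trans (le_abs_self _) (hbil x hcx p p)
      have h3 : ‖p‖ ≤ 1 := by linarith
      calc _ ≤ (n:ℝ)^2 * T x * ‖p‖ * ‖p‖ := h1
        _ ≤ (n:ℝ)^2 * T x * 1 * 1 := by gcongr
        _ = _ := by ring
    change c = T x / W + _ at e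
    constructor
    · have h1 : T x ≤ T x / W := by
        rw [le_div_iff₀ hW0]; nlinarith
      have h3 : 0 ≤ ⟪p, fderiv ℝ (gradient u) x p⟫ / W ^ 3 := by positivity
      linarith
    · have h1 : T x / W ≤ T x / w0 ^ 3 := by
        have : w0 ^ 3 ≤ W := by nlinarith [sq_nonneg w0, mul_pos hw0p hw0p]
        gcongr
      have h3 : ⟪p, fderiv ℝ (gradient u) x p⟫ / W ^ 3 ≤ (n:ℝ)^2 * T x / w0 ^ 3 := by
        gcongr
      calc c ≤ T x / w0 ^ 3 + (n:ℝ)^2 * T x / w0 ^ 3 := by linarith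
        _ = K * T x := by rw [hK]; ring
  -- upper bound for c
  have hcU : c ≤ K * (n * A) := by
    have hbs : Metric.closedBall x0 r ⊆ Ω := hball
    have hcontφ : ContinuousOn (fun y => u y - A / 2 * ‖y - x0‖ ^ 2) (Metric.closedBall x0 r) := by
      refine ContinuousOn.sub (fun y hy => (hsm y (hcl y (hbs hy))).continuousAt.continuousWithinAt) ?_
      fun_prop
    obtain ⟨z, hz, hzmax⟩ := (isCompact_closedBall x0 r).exists_isMaxOn
      ⟨x0, Metric.mem_closedBall_self hr.le⟩ hcontφ
    have hlip : ‖u z - u x0‖ ≤ 1 * ‖z - x0‖ := by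
      refine (convex_closedBall x0 r).norm_image_sub_le_of_norm_fderiv_le (𝕜 := ℝ)
        (fun y hy => (hsm y (hcl y (hbs hy))).differentiableAt (by simp)) (fun y hy => ?_)
        (Metric.mem_closedBall_self hr.le) hz
      have := hgrad y (hcl y (hbs hy))
      rw [gradient, LinearIsometryEquiv.norm_map] at this
      exact this.le
    have hz1 := hzmax (Metric.mem_closedBall_self hr.le)
    simp only [Set.mem_ofPred_eq, sub_self, norm_zero] at hz1
    have hzin : z ∈ Metric.ball x0 r := by
      rw [Metric.mem_ball, dist_eq_norm]
      by_contra hcon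
      push Not at hcon
      have h4 := le_trans (le_abs_self _) hlip
      have h5 : A * r = 3 := by rw [hA]; field_simp
      nlinarith
    have hloc : IsLocalMax (fun y => u y - A / 2 * ‖y - x0‖ ^ 2) z :=
      hzmax.isLocalMax (Filter.mem_of_superset (Metric.isOpen_ball.mem_nhds hzin)
        Metric.ball_subset_closedBall)
    have hzΩ := hbs hz
    have hTz : T z ≤ n * A := by
      calc T z ≤ ∑ i : Fin n, A := by
            refine Finset.sum_le_sum fun i _ => ?_
            have := aux_second_order (v := ev n i) (Filter.eventually_of_mem (hΩo.mem_nhds hzΩ)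
              fun y hy => hsm y (hcl y hy)) hloc
            simpa [ev] using this
        _ = n * A := by simp
    calc c ≤ K * T z := (hTc z hzΩ).2
      _ ≤ _ := by gcongr
  -- lower bound for c
  have hcL : δ ≤ c := by
    obtain ⟨x1, hx1, rfl⟩ := hbij.surjOn hp1
    obtain ⟨x2, hx2, rfl⟩ := hbij.surjOn hp2
    have hc0 : 0 ≤ c := le_trans (hT0 _ (hcl _ hx1)) (hTc _ hx1).1
    have hlip : ‖gradient u x2 - gradient u x1‖ ≤ ((n:ℝ)^2 * c) * ‖x2 - x1‖ := by
      refine hconv.norm_image_sub_le_of_norm_fderiv_le (𝕜 := ℝ)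
        (fun y hy => (aux_gradient_contDiffAt (hsm y (hcl y hy))).differentiableAt (by simp))
        (fun y hy => ?_) hx1 hx2
      refine ContinuousLinearMap.opNorm_le_bound _ (by positivity) fun w => ?_
      set v := fderiv ℝ (gradient u) y w with hv
      have h1 := hbil y (hcl y hy) v w
      rw [← hv, real_inner_self_eq_norm_sq, abs_of_nonneg (sq_nonneg _)] at h1
      have hTy : T y ≤ c := (hTc y hy).1
      rcases (norm_nonneg v).eq_or_lt with h0 | h0
      · rw [← h0]; positivity
      · have h3 : ‖v‖ ≤ (n:ℝ)^2 * T y * ‖w‖ := by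
          refine le_of_mul_le_mul_left ?_ h0
          change ‖v‖ ^ 2 ≤ (n:ℝ)^2 * T y * ‖v‖ * ‖w‖ at h1
          linarith
        exact h3.trans (by gcongr)
    have hxD : ‖x2 - x1‖ ≤ D' := by
      rw [← dist_eq_norm]; exact (hD hx2 hx1).trans (le_max_left _ _)
    rw [hδ, div_le_iff₀ (by positivity)]
    calc _ ≤ ((n:ℝ)^2 * c) * ‖x2 - x1‖ := hlip
      _ ≤ ((n:ℝ)^2 * c) * D' := by gcongr
      _ = _ := by ring
  have hTcont : ContinuousOn T (closure Ω) := by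
    intro x hx
    refine ContinuousAt.continuousWithinAt ?_
    have h1 : ContinuousAt (fderiv ℝ (gradient u)) x :=
      ((aux_gradient_contDiffAt (hsm x hx)).fderiv_right (m := 0) (by simp)).continuousAt
    simp only [hT]
    fun_prop
  have hlow : ∀ x ∈ closure Ω, δ / K ≤ T x := fun x hx =>
    le_on_closure (f := fun _ => δ / K) (fun y hy => by
      rw [div_le_iff₀ hK0]; linarith [(hTc y hy).2]) continuousOn_const hTcont hx
  have hup : ∀ x ∈ closure Ω, T x ≤ K * (n * A) := fun x hx =>
    le_on_closure (g := fun _ => K * (n * A)) (fun y hy => (hTc y hy).1.trans hcU)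
      hTcont continuousOn_const hx
  refine ⟨fun x hx ξ => ?_, fun x hx => ⟨hlow x hx, hup x hx⟩⟩
  have h1 := le_trans (le_abs_self _) (hbil x hx ξ ξ)
  have h3 := hup x hx
  calc _ ≤ (n:ℝ)^2 * T x * ‖ξ‖ * ‖ξ‖ := h1
    _ ≤ (n:ℝ)^2 * (K * (n * A)) * ‖ξ‖ * ‖ξ‖ := by gcongr
    _ = _ := by ring
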